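/- arXiv:2412.13954 — 5 statements merged into one kernel-verified Lean document; each statement's English description precedes it below -/
import Mathlib

section
/- The generalised capacitance matrix 𝓒 = VC has N distinct real eigenvalues 0 = λ_1 < λ_2 < … < λ_N; the eigenvalue 0 has eigenspace spanned by the all-ones vector 𝟙 = (1,…,1)ᵀ, and all other eigenvalues are strictly positive. -/
open Matrix BigOperators

/-- The capacitance matrix of a finite chain of `N` subwavelength resonators with
(0-indexed) spacings `s 0, …, s (N-2)`. -/
noncomputable def capMatrix (N : ℕ) (s : ℕ → ℝ) : Matrix (Fin N) (Fin N) ℝ :=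
  Matrix.of fun i j =>
    if (i : ℕ) = (j : ℕ) then
      (if (i : ℕ) = 0 then 0 else 1 / s ((i : ℕ) - 1)) +
        (if (i : ℕ) = N - 1 then 0 else 1 / s (i : ℕ))
    else if (i : ℕ) + 1 = (j : ℕ) then -(1 / s (i : ℕ))
    else if (j : ℕ) + 1 = (i : ℕ) then -(1 / s (j : ℕ))
    else 0

/-- The generalised capacitance matrix `𝓒 = VC` with `V = diag(v_i²/ℓ_i)`. -/
noncomputable def genCapMatrix (N : ℕ) (s : ℕ → ℝ) (ℓ v : Fin N → ℝ) :
    Matrix (Fin N) (Fin N) ℝ :=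
  Matrix.diagonal (fun i => v i ^ 2 / ℓ i) * capMatrix N s

/-!
`C` is the weighted Laplacian of a path, `C = Bᵀ diag(1/s) B` with `B` the incidence matrix, so it
is positive semidefinite and kills the constant vectors. The matrix `V C` has the same spectrum as
the symmetric matrix `√V C √V`, which makes its spectrum real and nonnegative. Both matrices are
tridiagonal with nonzero entries next to the diagonal, so the three-term recursion recovers an
eigenvector from its first coordinate: every eigenspace is a line, and therefore the `N`
eigenvalues are distinct and the kernel of `V C` is spanned by `𝟙`.
-/

section Spectrum

variable {n : Type*} [Fintype n] [DecidableEq n]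

theorem mem_spectrum_iff_exists_mulVec_eq_smul {K : Type*} [Field K] {A : Matrix n n K} {μ : K} :
    μ ∈ spectrum K A ↔ ∃ w, w ≠ 0 ∧ A *ᵥ w = μ • w := by
  rw [← Matrix.spectrum_toLin', ← Module.End.hasEigenvalue_iff_mem_spectrum,
    Module.End.hasEigenvalue_iff, Submodule.ne_bot_iff]
  simp only [Module.End.mem_eigenspace_iff, Matrix.toLin'_apply, and_comm]

theorem spectrum_mul_comm {K : Type*} [Field K] (A B : Matrix n n K) :
    spectrum K (A * B) = spectrum K (B * A) := by
  ext μ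
  rw [Matrix.mem_spectrum_iff_isRoot_charpoly, Matrix.mem_spectrum_iff_isRoot_charpoly,
    Matrix.charpoly_mul_comm]

theorem spectrum_diagonal_mul {d : n → ℝ} (hd : ∀ i, 0 ≤ d i) (A : Matrix n n ℝ) :
    spectrum ℝ (diagonal d * A) =
      spectrum ℝ (diagonal (fun i => √(d i)) * A * diagonal fun i => √(d i)) := by
  rw [spectrum_mul_comm _ (diagonal _), ← Matrix.mul_assoc, diagonal_mul_diagonal]
  simp only [Real.mul_self_sqrt (hd _)]

theorem nonneg_of_mem_spectrum_diagonal_mul {d : n → ℝ} (hd : ∀ i, 0 ≤ d i) {A : Matrix n n ℝ}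
    (hA : A.PosSemidef) {μ : ℝ} (hμ : μ ∈ spectrum ℝ (diagonal d * A)) : 0 ≤ μ := by
  have hS := hA.mul_mul_conjTranspose_same (diagonal fun i => √(d i))
  rw [diagonal_conjTranspose, star_trivial] at hS
  rw [spectrum_diagonal_mul hd] at hμ
  exact (posSemidef_iff_isHermitian_and_spectrum_nonneg.mp hS).2 hμ

end Spectrum

theorem exists_strictMono_range_eq {α : Type*} [LinearOrder α] {n : ℕ} {f : Fin n → α}
    (hf : f.Injective) : ∃ g : Fin n → α, StrictMono g ∧ Set.range g = Set.range f :=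
  ⟨f ∘ Tuple.sort f,
    (Tuple.monotone_sort f).strictMono_of_injective (hf.comp (Tuple.sort f).injective),
    (Tuple.sort f).surjective.range_comp f⟩

/-- An unreduced lower Hessenberg matrix: the entries above the first superdiagonal vanish and those
on it do not, so that an eigenvector is determined by its first coordinate. Indices are compared in
`ℕ` because addition in `Fin m` wraps around. -/
structure IsUnreducedHessenberg {R : Type*} [Zero R] {m : ℕ} (A : Matrix (Fin m) (Fin m) R) :
    Prop where
  apply_eq_zero : ∀ ⦃i j : Fin m⦄, (i : ℕ) + 1 < j → A i j = 0
  apply_ne_zero : ∀ ⦃i j : Fin m⦄, (i : ℕ) + 1 = j → A i j ≠ 0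

namespace IsUnreducedHessenberg

section Semiring

variable {R : Type*} [Semiring R] [NoZeroDivisors R] {m : ℕ}

theorem diagonal_mul {A : Matrix (Fin m) (Fin m) R} (hA : IsUnreducedHessenberg A) {d : Fin m → R}
    (hd : ∀ i, d i ≠ 0) : IsUnreducedHessenberg (diagonal d * A) where
  apply_eq_zero i j hij := by rw [Matrix.diagonal_mul, hA.apply_eq_zero hij, mul_zero]
  apply_ne_zero i j hij := by
    rw [Matrix.diagonal_mul]; exact mul_ne_zero (hd i) (hA.apply_ne_zero hij)

theorem mul_diagonal {A : Matrix (Fin m) (Fin m) R} (hA : IsUnreducedHessenberg A) {d : Fin m → R}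
    (hd : ∀ i, d i ≠ 0) : IsUnreducedHessenberg (A * diagonal d) where
  apply_eq_zero i j hij := by rw [Matrix.mul_diagonal, hA.apply_eq_zero hij, zero_mul]
  apply_ne_zero i j hij := by
    rw [Matrix.mul_diagonal]; exact mul_ne_zero (hA.apply_ne_zero hij) (hd j)

theorem eq_zero_of_apply_zero {A : Matrix (Fin (m + 1)) (Fin (m + 1)) R}
    (hA : IsUnreducedHessenberg A) {μ : R} {w : Fin (m + 1) → R} (hw : A *ᵥ w = μ • w)
    (h0 : w 0 = 0) : w = 0 := by
  suffices ∀ k (hk : k < m + 1), w ⟨k, hk⟩ = 0 from funext fun i => this i i.2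
  intro k
  induction k using Nat.strong_induction_on with
  | _ k ih =>
    intro hk
    obtain _ | k := k
    · exact h0
    have hk' : k < m + 1 := by omega
    have row : ∑ j, A ⟨k, hk'⟩ j * w j = 0 := by
      simpa [ih k k.lt_succ_self hk', mulVec, dotProduct] using congrFun hw ⟨k, hk'⟩
    rw [Finset.sum_eq_single_of_mem ⟨k + 1, hk⟩ (Finset.mem_univ _)] at row
    · exact (mul_eq_zero.mp row).resolve_left (hA.apply_ne_zero rfl)
    · intro j _ hj
      obtain hlt | hgt := Nat.lt_or_gt_of_ne (Fin.val_ne_of_ne hj)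
      · rw [ih j hlt j.2, mul_zero]
      · rw [hA.apply_eq_zero hgt, zero_mul]

end Semiring

theorem smul_eq_smul_of_mulVec_eq_smul {R : Type*} [CommRing R] [NoZeroDivisors R] {m : ℕ}
    {A : Matrix (Fin (m + 1)) (Fin (m + 1)) R} (hA : IsUnreducedHessenberg A) {μ : R}
    {u w : Fin (m + 1) → R} (hu : A *ᵥ u = μ • u) (hw : A *ᵥ w = μ • w) :
    w 0 • u = u 0 • w := by
  refine sub_eq_zero.mp (hA.eq_zero_of_apply_zero (μ := μ) ?_ ?_)
  · rw [mulVec_sub, mulVec_smul, mulVec_smul, hu, hw, smul_sub, smul_comm μ, smul_comm μ]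
  · simp [mul_comm]

theorem mulVec_eq_zero_iff {R : Type*} [CommRing R] [NoZeroDivisors R] {m : ℕ}
    {A : Matrix (Fin (m + 1)) (Fin (m + 1)) R} (hA : IsUnreducedHessenberg A) (hone : A *ᵥ 1 = 0)
    {w : Fin (m + 1) → R} : A *ᵥ w = 0 ↔ ∃ c, w = fun _ => c := by
  constructor
  · intro hw
    have hsmul := hA.smul_eq_smul_of_mulVec_eq_smul (hw.trans (zero_smul R w).symm)
      (hone.trans (zero_smul R 1).symm)
    exact ⟨w 0, by simpa [funext_iff] using hsmul⟩
  · rintro ⟨c, rfl⟩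
    have hconst : (fun _ => c) = c • (1 : Fin (m + 1) → R) := by ext; simp
    rw [hconst, mulVec_smul, hone, smul_zero]

theorem eigenvalues_injective {𝕜 : Type*} [RCLike 𝕜] {m : ℕ}
    {A : Matrix (Fin (m + 1)) (Fin (m + 1)) 𝕜} (hA : IsUnreducedHessenberg A)
    (hH : A.IsHermitian) : hH.eigenvalues.Injective := by
  intro i j hij
  by_contra hne
  have hb := hH.mulVec_eigenvectorBasis
  simp only [RCLike.real_smul_eq_coe_smul (K := 𝕜)] at hb
  set b := hH.eigenvectorBasis
  have hdep : b j 0 • b i = b i 0 • b j :=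
    WithLp.ofLp_injective 2 (hA.smul_eq_smul_of_mulVec_eq_smul (hb i) (hij ▸ hb j))
  have h0 : b j 0 = 0 := by
    simpa [inner_smul_right, b.inner_eq_one, b.inner_eq_zero hne] using
      congrArg (inner 𝕜 (b i)) hdep
  exact b.toBasis.ne_zero j (by simpa using hA.eq_zero_of_apply_zero (hb j) h0)

theorem exists_strictMono_range_eq_spectrum {m : ℕ} {A : Matrix (Fin (m + 1)) (Fin (m + 1)) ℝ}
    (hA : IsUnreducedHessenberg A) (hH : A.IsHermitian) {d : Fin (m + 1) → ℝ} (hd : ∀ i, 0 < d i) :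
    ∃ lam : Fin (m + 1) → ℝ, StrictMono lam ∧ Set.range lam = spectrum ℝ (diagonal d * A) := by
  have hr (i) : √(d i) ≠ 0 := (Real.sqrt_pos.mpr (hd i)).ne'
  have hS := isHermitian_mul_mul_conjTranspose (diagonal fun i => √(d i)) hH
  rw [diagonal_conjTranspose, star_trivial] at hS
  rw [spectrum_diagonal_mul fun i => (hd i).le, hS.spectrum_real_eq_range_eigenvalues]
  exact exists_strictMono_range_eq (((hA.diagonal_mul hr).mul_diagonal hr).eigenvalues_injective hS)

end IsUnreducedHessenberg

section Capacitance

variable {m : ℕ} {s : ℕ → ℝ}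

/-- The matrix of the forward difference `w ↦ (w (k + 1) - w k)`, that is, the incidence matrix of
the path on the resonators. It factors the capacitance matrix as a weighted path Laplacian. -/
def diffMatrix (m : ℕ) : Matrix (Fin m) (Fin (m + 1)) ℝ :=
  Matrix.of fun k => Pi.single k.succ 1 - Pi.single k.castSucc 1

theorem diffMatrix_mulVec_apply (m : ℕ) (w : Fin (m + 1) → ℝ) (k : Fin m) :
    (diffMatrix m *ᵥ w) k = w k.succ - w k.castSucc := by
  change (Pi.single k.succ 1 - Pi.single k.castSucc 1) ⬝ᵥ w = _
  simp [sub_dotProduct]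

theorem transpose_diffMatrix_mulVec_apply (m : ℕ) (x : ℕ → ℝ) (i : Fin (m + 1)) :
    ((diffMatrix m)ᵀ *ᵥ fun k => x k) i =
      (if (i : ℕ) = 0 then 0 else x (i - 1)) - if (i : ℕ) = m then 0 else x i := by
  have sum_succ : ∑ k : Fin m, (if i = k.succ then x k else 0) =
      if (i : ℕ) = 0 then 0 else x (i - 1) := by
    cases i using Fin.cases <;> simp [fun k : Fin m => (Fin.succ_ne_zero k).symm]
  have sum_castSucc : ∑ k : Fin m, (if i = k.castSucc then x k else 0) =
      if (i : ℕ) = m then 0 else x i := by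
    cases i using Fin.lastCases <;>
      simp [fun k : Fin m => (Fin.castSucc_ne_last k).symm, Nat.ne_of_lt]
  simp [mulVec, dotProduct, diffMatrix, Pi.single_apply, sub_mul, Finset.sum_sub_distrib,
    sum_succ, sum_castSucc]

theorem capMatrix_eq_transpose_mul_mul (m : ℕ) (s : ℕ → ℝ) :
    capMatrix (m + 1) s =
      (diffMatrix m)ᵀ * diagonal (fun k : Fin m => 1 / s k) * diffMatrix m := by
  rw [Matrix.mul_assoc]
  ext i j
  let x (k : ℕ) : ℝ :=
    1 / s k * ((if (j : ℕ) = k + 1 then 1 else 0) - if (j : ℕ) = k then 1 else 0)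
  have col_eq : (diagonal (fun k : Fin m => 1 / s k) * diffMatrix m).col j =
      fun k : Fin m => x k := by
    ext k
    simp [x, diffMatrix, Pi.single_apply, Fin.ext_iff]
  have entry_eq := transpose_diffMatrix_mulVec_apply m x i
  rw [← col_eq] at entry_eq
  refine Eq.trans ?_ entry_eq.symm
  simp only [capMatrix, of_apply, x]
  grind

theorem posSemidef_capMatrix (hs : ∀ k < m, 0 < s k) : (capMatrix (m + 1) s).PosSemidef := by
  rw [capMatrix_eq_transpose_mul_mul, ← conjTranspose_eq_transpose_of_trivial]
  refine (PosSemidef.diagonal fun k => ?_).conjTranspose_mul_mul_same _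
  exact (one_div_pos.mpr (hs k k.2)).le

theorem capMatrix_mulVec_one (m : ℕ) (s : ℕ → ℝ) : capMatrix (m + 1) s *ᵥ 1 = 0 := by
  have hdiff : diffMatrix m *ᵥ 1 = 0 :=
    funext fun k => (diffMatrix_mulVec_apply m 1 k).trans (sub_self 1)
  rw [capMatrix_eq_transpose_mul_mul, ← mulVec_mulVec, hdiff, mulVec_zero]

theorem isUnreducedHessenberg_capMatrix (hs : ∀ k < m, s k ≠ 0) :
    IsUnreducedHessenberg (capMatrix (m + 1) s) where
  apply_eq_zero i j hij := by
    simp only [capMatrix, of_apply]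
    rw [if_neg (by omega), if_neg (by omega), if_neg (by omega)]
  apply_ne_zero i j hij := by
    simpa [capMatrix, ← hij] using hs i (by omega)

end Capacitance

/-- the generalised capacitance matrix `𝓒 = VC` has `N` distinct real
eigenvalues `0 = λ_1 < λ_2 < … < λ_N`; these exhaust all real eigenvalues, and the eigenvalue
`0` has eigenspace spanned by the all-ones vector. -/
theorem statement4 (N : ℕ) (hN : 2 ≤ N) (s : ℕ → ℝ) (hs : ∀ i, i < N - 1 → 0 < s i)
    (ℓ v : Fin N → ℝ) (hℓ : ∀ i, 0 < ℓ i) (hv : ∀ i, 0 < v i) :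
    ∃ lam : Fin N → ℝ, StrictMono lam ∧ lam ⟨0, by omega⟩ = 0 ∧
      (∀ i, ∃ w : Fin N → ℝ, w ≠ 0 ∧ (genCapMatrix N s ℓ v).mulVec w = lam i • w) ∧
      (∀ μ : ℝ, (∃ w : Fin N → ℝ, w ≠ 0 ∧ (genCapMatrix N s ℓ v).mulVec w = μ • w) →
        ∃ i, lam i = μ) ∧
      (∀ w : Fin N → ℝ, (genCapMatrix N s ℓ v).mulVec w = 0 ↔ ∃ c : ℝ, w = fun _ => c) := by
  obtain ⟨m, rfl⟩ : ∃ m, N = m + 1 := ⟨N - 1, by omega⟩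
  have hd (i) : 0 < v i ^ 2 / ℓ i := div_pos (pow_pos (hv i) 2) (hℓ i)
  have hC := isUnreducedHessenberg_capMatrix fun k hk => (hs k hk).ne'
  have hpsd := posSemidef_capMatrix hs
  have hone : genCapMatrix (m + 1) s ℓ v *ᵥ 1 = 0 := by
    rw [genCapMatrix, ← mulVec_mulVec, capMatrix_mulVec_one, mulVec_zero]
  obtain ⟨lam, hmono, hrange⟩ := hC.exists_strictMono_range_eq_spectrum hpsd.isHermitian hd
  have heig (μ : ℝ) : (∃ w, w ≠ 0 ∧ genCapMatrix (m + 1) s ℓ v *ᵥ w = μ • w) ↔ ∃ i, lam i = μ :=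
    mem_spectrum_iff_exists_mulVec_eq_smul.symm.trans (Set.ext_iff.mp hrange.symm μ)
  refine ⟨lam, hmono, le_antisymm ?_ ?_, fun i => (heig _).mpr ⟨i, rfl⟩, fun μ => (heig μ).mp,
    fun _ => (hC.diagonal_mul fun i => (hd i).ne').mulVec_eq_zero_iff hone⟩
  · obtain ⟨i, hi⟩ := (heig 0).mp ⟨1, one_ne_zero, hone.trans (zero_smul ℝ 1).symm⟩
    exact hi ▸ hmono.monotone (Fin.zero_le i)
  · exact nonneg_of_mem_spectrum_diagonal_mul (fun i => (hd i).le) hpsd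
      (hrange ▸ Set.mem_range_self _)
end

section
/- Let 𝓒 = VC with all wave speeds equal to one and let T_tot(λ) := T_N(λ)T_{N−1}(λ)⋯T_1(λ). Then λ ∈ ℝ is an eigenvalue of 𝓒 if and only if the vector (1,1)ᵀ is an eigenvector of T_tot(λ), i.e., T_tot(λ)(1,1)ᵀ = ν(1,1)ᵀ for some ν ∈ ℝ. -/
open Matrix BigOperators

/-- The 0-indexed predecessor of `i`, with the convention `s_{-1} := s_{N-1}`
(paper: `s_0 := s_N`). -/
def prevIdx (N i : ℕ) : ℕ := if i = 0 then N - 1 else i - 1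

/-- The transfer matrix `T_i(λ)` (0-indexed). -/
noncomputable def transferM (N : ℕ) (s ℓ : ℕ → ℝ) (lam : ℝ) (i : ℕ) :
    Matrix (Fin 2) (Fin 2) ℝ :=
  !![1 + s i / s (prevIdx N i) - ℓ i * s i * lam, -(s i / s (prevIdx N i)); 1, 0]

/-- Ordered product `f (a + k - 1) * ⋯ * f (a + 1) * f a` of `k` matrices. -/
noncomputable def orderedProd (f : ℕ → Matrix (Fin 2) (Fin 2) ℝ) (a : ℕ) :
    ℕ → Matrix (Fin 2) (Fin 2) ℝ
  | 0 => 1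
  | k + 1 => f (a + k) * orderedProd f a k

/-!
Extend `u : Fin N → ℝ` to `ℕ` with `u N = u (N - 1)`, and read the missing left neighbour of `u 0`
as `u 0` itself. These reflecting boundary conditions make every row of `C u`, including the first
and the last, the same second difference, so that `V C u = λ u` becomes the recurrence driven by
the transfer matrices on the vectors `(u k, u (k - 1))`. A solution is determined by `u 0`, starting
from `(u 0, u 0)`, and the one with `u 0 = 1` is an eigenvector exactly when it satisfies the
remaining condition `u N = u (N - 1)`, that is, when `T_tot(λ)` maps `(1, 1)` to the diagonal.
-/

theorem exists_extension_apply_eq_apply_pred {α : Type*} {N : ℕ} (hN : N ≠ 0) (w : Fin N → α) :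
    ∃ u : ℕ → α, u N = u (N - 1) ∧ (fun j : Fin N => u j) = w := by
  refine ⟨fun k => w ⟨min k (N - 1), by omega⟩, by simp, funext fun j => ?_⟩
  have hj : min (j : ℕ) (N - 1) = j := by omega
  simp only [hj]

theorem exists_eq_smul_one_one_iff {R : Type*} [Semiring R] (v : Fin 2 → R) :
    (∃ ν : R, v = ν • ![1, 1]) ↔ v 0 = v 1 := by
  simp [funext_iff, Fin.forall_fin_two, eq_comm]

theorem sum_ite_eq_val_mul {R : Type*} [NonUnitalNonAssocSemiring R] {N : ℕ} (a : ℕ)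
    (c u : ℕ → R) :
    ∑ j : Fin N, (if a = j then c j else 0) * u j = if a < N then c a * u a else 0 := by
  rw [Fin.sum_univ_eq_sum_range fun j => (if a = j then c j else 0) * u j]
  simp only [ite_mul, zero_mul, Finset.sum_ite_eq, Finset.mem_range]

/-- The state `(u k, u (k - 1))` propagated by the transfer matrices. Truncated subtraction gives
`(u 0, u 0)` at `k = 0`, which encodes the reflecting condition at the left end of the chain. -/
def stateVec {α : Type*} (u : ℕ → α) (k : ℕ) : Fin 2 → α := ![u k, u (k - 1)]

theorem orderedProd_mulVec_eq (f : ℕ → Matrix (Fin 2) (Fin 2) ℝ) (v : ℕ → Fin 2 → ℝ) (a k : ℕ)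
    (hv : ∀ i < k, f (a + i) *ᵥ v (a + i) = v (a + i + 1)) :
    orderedProd f a k *ᵥ v a = v (a + k) := by
  induction k with
  | zero => simp [orderedProd]
  | succ k ih =>
    rw [orderedProd, ← mulVec_mulVec, ih fun i hi => hv i (by omega), hv k (by omega), add_assoc]

section Chain

variable {N : ℕ} {s ℓ : ℕ → ℝ} {lam : ℝ} {u : ℕ → ℝ}

theorem capMatrix_apply_eq_add (N : ℕ) (s : ℕ → ℝ) (i j : Fin N) :
    capMatrix N s i j =
      (if (i : ℕ) = j then
        (if (i : ℕ) = 0 then 0 else 1 / s (i - 1)) + (if (i : ℕ) = N - 1 then 0 else 1 / s i)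
        else 0) +
      (if (i : ℕ) + 1 = j then -(1 / s i) else 0) +
      (if (j : ℕ) + 1 = i then -(1 / s j) else 0) := by
  rw [capMatrix, of_apply]
  split_ifs <;> first | omega | simp

theorem capMatrix_mulVec_apply (N : ℕ) (s u : ℕ → ℝ) (i : Fin N) :
    (capMatrix N s *ᵥ fun j => u j) i =
      (if (i : ℕ) = 0 then 0 else (u i - u (i - 1)) / s (i - 1)) +
      (if (i : ℕ) = N - 1 then 0 else (u i - u (i + 1)) / s i) := by
  have diagonal_sum (d : ℝ) : ∑ j : Fin N, (if (i : ℕ) = j then d else 0) * u j = d * u i := by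
    rw [sum_ite_eq_val_mul i (fun _ => d) u, if_pos i.is_lt]
  have right_sum : ∑ j : Fin N, (if (i : ℕ) + 1 = j then -(1 / s i) else 0) * u j =
      if (i : ℕ) = N - 1 then 0 else -(1 / s i) * u (i + 1) := by
    rw [sum_ite_eq_val_mul (i + 1) (fun _ => -(1 / s i)) u]
    split_ifs <;> first | omega | rfl
  have left_sum : ∑ j : Fin N, (if (j : ℕ) + 1 = i then -(1 / s j) else 0) * u j =
      if (i : ℕ) = 0 then 0 else -(1 / s (i - 1)) * u (i - 1) := by
    obtain ⟨_ | i, hi⟩ := i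
    · simp
    · simp only [add_left_inj, eq_comm (b := i), Nat.add_sub_cancel, Nat.succ_ne_zero, if_false]
      rw [sum_ite_eq_val_mul i (fun j => -(1 / s j)) u, if_pos (by omega)]
  simp only [mulVec, dotProduct, capMatrix_apply_eq_add, add_mul _ _ (u _),
    Finset.sum_add_distrib, diagonal_sum, right_sum, left_sum]
  split_ifs <;> ring

theorem capMatrix_mulVec_apply_of_apply_eq_apply_pred (s : ℕ → ℝ) (hu : u N = u (N - 1))
    (i : Fin N) :
    (capMatrix N s *ᵥ fun j => u j) i =
      (u i - u (i - 1)) / s (prevIdx N i) + (u i - u (i + 1)) / s i := by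
  rw [capMatrix_mulVec_apply]
  congr 1
  · split_ifs with h <;> simp [prevIdx, h]
  · split_ifs with h
    · rw [h, Nat.sub_add_cancel (by omega), hu, sub_self, zero_div]
    · rfl

theorem transferM_mulVec_stateVec_iff {i : ℕ} (hs : s i ≠ 0) :
    transferM N s ℓ lam i *ᵥ stateVec u i = stateVec u (i + 1) ↔
      (u i - u (i - 1)) / s (prevIdx N i) + (u i - u (i + 1)) / s i = ℓ i * (lam * u i) := by
  have transfer_row :
      transferM N s ℓ lam i *ᵥ stateVec u i = stateVec u (i + 1) ↔
        (1 + s i / s (prevIdx N i) - ℓ i * s i * lam) * u i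
          - s i / s (prevIdx N i) * u (i - 1) = u (i + 1) := by
    simp [transferM, stateVec, funext_iff, Fin.forall_fin_two, sub_eq_add_neg, mul_comm]
  have cleared :
      s i * ((u i - u (i - 1)) / s (prevIdx N i) + (u i - u (i + 1)) / s i) =
        s i / s (prevIdx N i) * (u i - u (i - 1)) + (u i - u (i + 1)) := by
    rw [mul_add, mul_div_cancel₀ _ hs]
    ring
  rw [transfer_row, ← mul_right_inj' (b := _ + _) hs, cleared]
  constructor <;> intro h <;> linear_combination h

theorem diagonal_mul_capMatrix_mulVec_eq_smul_iff (hs : ∀ i < N, s i ≠ 0) (hℓ : ∀ i < N, ℓ i ≠ 0)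
    (hu : u N = u (N - 1)) :
    ((diagonal (fun i : Fin N => 1 / ℓ i) * capMatrix N s) *ᵥ fun j => u j) =
        lam • (fun j : Fin N => u j) ↔
      ∀ i < N, transferM N s ℓ lam i *ᵥ stateVec u i = stateVec u (i + 1) := by
  rw [← mulVec_mulVec, funext_iff, Fin.forall_iff]
  refine forall₂_congr fun i hi => ?_
  rw [transferM_mulVec_stateVec_iff (hs i hi), mulVec_diagonal,
    capMatrix_mulVec_apply_of_apply_eq_apply_pred s hu, one_div, inv_mul_eq_iff_eq_mul₀ (hℓ i hi),
    Pi.smul_apply, smul_eq_mul]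

/-- The solution of the transfer recurrence with initial state `(1, 1)`: the first component of
`T_k(λ) ⋯ T_1(λ) (1, 1)ᵀ`. -/
noncomputable def transferSeq (N : ℕ) (s ℓ : ℕ → ℝ) (lam : ℝ) (k : ℕ) : ℝ :=
  (orderedProd (transferM N s ℓ lam) 0 k *ᵥ ![1, 1]) 0

theorem transferSeq_zero (N : ℕ) (s ℓ : ℕ → ℝ) (lam : ℝ) : transferSeq N s ℓ lam 0 = 1 := by
  simp [transferSeq, orderedProd]

theorem orderedProd_transferM_mulVec_one_one (N : ℕ) (s ℓ : ℕ → ℝ) (lam : ℝ) (k : ℕ) :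
    orderedProd (transferM N s ℓ lam) 0 k *ᵥ ![1, 1] = stateVec (transferSeq N s ℓ lam) k := by
  have second_component : (orderedProd (transferM N s ℓ lam) 0 k *ᵥ ![1, 1]) 1 =
      transferSeq N s ℓ lam (k - 1) := by
    cases k with
    | zero => simp [transferSeq, orderedProd]
    | succ k =>
      rw [orderedProd, ← mulVec_mulVec, Nat.add_sub_cancel, transferSeq]
      simp [transferM, mulVec, dotProduct]
  ext i
  fin_cases i
  · rfl
  · exact second_component

theorem transferM_mulVec_stateVec_transferSeq (N : ℕ) (s ℓ : ℕ → ℝ) (lam : ℝ) (k : ℕ) :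
    transferM N s ℓ lam k *ᵥ stateVec (transferSeq N s ℓ lam) k =
      stateVec (transferSeq N s ℓ lam) (k + 1) := by
  simp only [← orderedProd_transferM_mulVec_one_one, orderedProd, zero_add, mulVec_mulVec]

theorem eq_mul_transferSeq {n : ℕ}
    (hu : ∀ i < n, transferM N s ℓ lam i *ᵥ stateVec u i = stateVec u (i + 1)) :
    u n = u 0 * transferSeq N s ℓ lam n := by
  have initial_state : stateVec u 0 = u 0 • ![1, 1] := by simp [stateVec]
  have final_state : stateVec u n = u 0 • stateVec (transferSeq N s ℓ lam) n := by
    rw [← orderedProd_transferM_mulVec_one_one, ← mulVec_smul, ← initial_state,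
      orderedProd_mulVec_eq _ (stateVec u) 0 n (by simpa using hu), zero_add]
  exact congrFun final_state 0

theorem exists_eigenvector_iff_transferSeq_eq_pred (hN : N ≠ 0) (hs : ∀ i < N, s i ≠ 0)
    (hℓ : ∀ i < N, ℓ i ≠ 0) :
    (∃ w : Fin N → ℝ, w ≠ 0 ∧
        (diagonal (fun i : Fin N => 1 / ℓ i) * capMatrix N s) *ᵥ w = lam • w) ↔
      transferSeq N s ℓ lam N = transferSeq N s ℓ lam (N - 1) := by
  constructor
  · rintro ⟨w, hw, heig⟩
    obtain ⟨u, hu, rfl⟩ := exists_extension_apply_eq_apply_pred hN w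
    have hrec := (diagonal_mul_capMatrix_mulVec_eq_smul_iff hs hℓ hu).mp heig
    have proportional : ∀ k ≤ N, u k = u 0 * transferSeq N s ℓ lam k := fun k hk =>
      eq_mul_transferSeq fun i hi => hrec i (hi.trans_le hk)
    have u_zero_ne : u 0 ≠ 0 := fun h0 =>
      hw (funext fun j => by simp [proportional j j.is_lt.le, h0])
    apply mul_left_cancel₀ u_zero_ne
    rw [← proportional N le_rfl, ← proportional (N - 1) (N.sub_le 1), hu]
  · intro hend
    refine ⟨fun j => transferSeq N s ℓ lam j, fun hzero => ?_,
      (diagonal_mul_capMatrix_mulVec_eq_smul_iff hs hℓ hend).mpr fun i _ =>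
        transferM_mulVec_stateVec_transferSeq N s ℓ lam i⟩
    have := congrFun hzero ⟨0, Nat.pos_of_ne_zero hN⟩
    simp [transferSeq_zero] at this

end Chain

theorem statement8_general (N : ℕ) (hN : N ≠ 0) (s ℓ : ℕ → ℝ)
    (hs : ∀ i < N, s i ≠ 0) (hℓ : ∀ i < N, ℓ i ≠ 0) (lam : ℝ) :
    (∃ w : Fin N → ℝ, w ≠ 0 ∧
        (diagonal (fun i : Fin N => 1 / ℓ i) * capMatrix N s) *ᵥ w = lam • w) ↔
      ∃ ν : ℝ, orderedProd (transferM N s ℓ lam) 0 N *ᵥ ![1, 1] = ν • ![1, 1] := by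
  rw [exists_eigenvector_iff_transferSeq_eq_pred hN hs hℓ, exists_eq_smul_one_one_iff,
    orderedProd_transferM_mulVec_one_one]
  rfl

/-- with `T_tot(λ) = T_N(λ)⋯T_1(λ)`, a real `λ` is an eigenvalue of
`𝓒 = VC` (unit wave speeds) if and only if `(1,1)ᵀ` is an eigenvector of `T_tot(λ)`. -/
theorem statement8 (N : ℕ) (hN : 2 ≤ N) (s ℓ : ℕ → ℝ)
    (hs : ∀ i, i < N → 0 < s i) (hℓ : ∀ i, i < N → 0 < ℓ i) (lam : ℝ) :
    (∃ w : Fin N → ℝ, w ≠ 0 ∧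
        (Matrix.diagonal (fun i : Fin N => 1 / ℓ (i : ℕ)) * capMatrix N s).mulVec w =
          lam • w) ↔
      ∃ ν : ℝ, (orderedProd (transferM N s ℓ lam) 0 N).mulVec ![1, 1] = ν • ![1, 1] :=
  statement8_general N (by omega) s ℓ (fun i hi => (hs i hi).ne') (fun i hi => (hℓ i hi).ne') lam
end

section
/- For any indices 1 ≤ a ≤ b ≤ N and λ ∈ ℝ, the ordered product of transfer matrices equals the conjugated ordered product of propagation matrices: T_b(λ)T_{b−1}(λ)⋯T_a(λ) = S_{s_b}^{-1} (P_{ℓ_b,s_b}(λ)P_{ℓ_{b−1},s_{b−1}}(λ)⋯P_{ℓ_a,s_a}(λ)) S_{s_{a−1}}. -/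
open Matrix BigOperators

/-- The subwavelength propagation matrix `P_{ℓ,s}(λ)`. -/
noncomputable def propM (l sp lam : ℝ) : Matrix (Fin 2) (Fin 2) ℝ :=
  !![1 - sp * l * lam, sp; -(l * lam), 1]

/-- The change-of-basis matrix `S_s`. -/
noncomputable def cobM (sp : ℝ) : Matrix (Fin 2) (Fin 2) ℝ :=
  !![1, 0; 1 / sp, -(1 / sp)]

/-!
If `u` solves the chain, `T_i` advances the pair `(u_i, u_{i-1})` of consecutive values to
`(u_{i+1}, u_i)`, while `P_{ℓ,s}` advances a value together with a slope. The matrix `S_s` turns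
the former data into the latter, the slope being the difference quotient over the gap `s`.
A single step is therefore the intertwining `S_{s_i} T_i = P_{ℓ_i,s_i} S_{s_{i-1}}`. Since the
change of basis leaving one step is the one entering the next, these identities telescope along
the product.
-/

theorem mul_orderedProd_eq_orderedProd_mul {f g c : ℕ → Matrix (Fin 2) (Fin 2) ℝ} {a k : ℕ}
    (h : ∀ i ∈ Set.Ico a (a + k), c (i + 1) * f i = g i * c i) :
    c (a + k) * orderedProd f a k = orderedProd g a k * c a := by
  induction k with
  | zero => simp only [orderedProd, add_zero, mul_one, one_mul]
  | succ k ih =>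
    have step : c (a + k + 1) * f (a + k) = g (a + k) * c (a + k) :=
      h (a + k) ⟨by omega, by omega⟩
    have prefix_eq : c (a + k) * orderedProd f a k = orderedProd g a k * c a :=
      ih fun i hi => h i ⟨hi.1, hi.2.trans (by omega)⟩
    calc c (a + k + 1) * (f (a + k) * orderedProd f a k)
        = g (a + k) * (c (a + k) * orderedProd f a k) := by
          rw [← mul_assoc, step, mul_assoc]
      _ = g (a + k) * orderedProd g a k * c a := by rw [prefix_eq, mul_assoc]

theorem isUnit_det_cobM {sp : ℝ} (hsp : sp ≠ 0) : IsUnit (cobM sp).det := by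
  have det_eq : (cobM sp).det = -(1 / sp) := by simp [cobM, det_fin_two]
  rw [det_eq, isUnit_iff_ne_zero]
  exact neg_ne_zero.mpr (one_div_ne_zero hsp)

theorem prevIdx_succ (N i : ℕ) : prevIdx N (i + 1) = i := rfl

section Intertwining

variable (N : ℕ) {s : ℕ → ℝ} (ℓ : ℕ → ℝ) (lam : ℝ)

theorem cobM_mul_transferM {i : ℕ} (hs : s i ≠ 0) :
    cobM (s i) * transferM N s ℓ lam i = propM (ℓ i) (s i) lam * cobM (s (prevIdx N i)) := by
  have cancel : 1 / s i * s i = 1 := one_div_mul_cancel hs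
  rw [cobM, transferM, propM, cobM, mul_fin_two, mul_fin_two]
  congrm !![?_, ?_; ?_, ?_]
  · ring
  · ring
  · linear_combination (1 / s (prevIdx N i) - ℓ i * lam) * cancel
  · linear_combination -(1 / s (prevIdx N i)) * cancel

theorem cobM_mul_orderedProd_transferM {a k : ℕ} (hs : ∀ i ∈ Set.Ico a (a + k), s i ≠ 0) :
    cobM (s (prevIdx N (a + k))) * orderedProd (transferM N s ℓ lam) a k =
      orderedProd (fun i => propM (ℓ i) (s i) lam) a k * cobM (s (prevIdx N a)) :=
  mul_orderedProd_eq_orderedProd_mul (c := fun i => cobM (s (prevIdx N i))) fun i hi => by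
    simpa only [prevIdx_succ] using cobM_mul_transferM N ℓ lam (hs i hi)

end Intertwining

theorem statement10_general (N : ℕ) (s ℓ : ℕ → ℝ) (hs : ∀ i, i < N → s i ≠ 0) (lam : ℝ)
    (a b : ℕ) (hab : a ≤ b) (hb : b < N) :
    orderedProd (transferM N s ℓ lam) a (b - a + 1) =
      (cobM (s b))⁻¹ *
        orderedProd (fun i => propM (ℓ i) (s i) lam) a (b - a + 1) *
        cobM (s (prevIdx N a)) := by
  have index_eq : a + (b - a + 1) = b + 1 := by omega
  have intertwine := cobM_mul_orderedProd_transferM N ℓ lam (a := a) (k := b - a + 1)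
    fun i hi => hs i (hi.2.trans_le (by omega))
  rw [index_eq, prevIdx_succ] at intertwine
  rw [mul_assoc, ← intertwine, nonsing_inv_mul_cancel_left _ _ (isUnit_det_cobM (hs b hb))]

/-- for all (0-indexed) `0 ≤ a ≤ b ≤ N - 1`,
`T_b(λ)⋯T_a(λ) = S_{s_b}⁻¹ (P_{ℓ_b,s_b}(λ)⋯P_{ℓ_a,s_a}(λ)) S_{s_{a-1}}`. -/
theorem statement10 (N : ℕ) (hN : 2 ≤ N) (s ℓ : ℕ → ℝ)
    (hs : ∀ i, i < N → 0 < s i) (hℓ : ∀ i, i < N → 0 < ℓ i) (lam : ℝ)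
    (a b : ℕ) (hab : a ≤ b) (hb : b ≤ N - 1) :
    orderedProd (transferM N s ℓ lam) a (b - a + 1) =
      (cobM (s b))⁻¹ *
        orderedProd (fun i => propM (ℓ i) (s i) lam) a (b - a + 1) *
        cobM (s (prevIdx N a)) :=
  statement10_general N s ℓ (fun i hi => (hs i hi).ne') lam a b hab (by omega)
end

section
/- Let 𝓒^α = VC^α with all wave speeds equal to one and define the total propagation matrix P_tot(λ) := P_{ℓ_N,s_N}(λ)P_{ℓ_{N−1},s_{N−1}}(λ)⋯P_{ℓ_1,s_1}(λ). Then λ ∈ ℝ is an eigenvalue of 𝓒^α if and only if e^{iαL} is an eigenvalue of P_tot(λ) (as a complex matrix). -/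
open Matrix BigOperators

/-- The quasiperiodic capacitance matrix (0-indexed spacings `s 0, …, s (N-1)`, with `s (N-1)`
playing the role of `s_N = s_0`), unit-cell length `L` and quasimomentum `α`. -/
noncomputable def qpCapMatrix (N : ℕ) (s : ℕ → ℝ) (L α : ℝ) : Matrix (Fin N) (Fin N) ℂ :=
  Matrix.of fun i j =>
    (if (i : ℕ) = (j : ℕ) then
        ((1 / s (if (i : ℕ) = 0 then N - 1 else (i : ℕ) - 1) + 1 / s (i : ℕ) : ℝ) : ℂ)
      else 0) +
    (if (i : ℕ) + 1 = (j : ℕ) then ((-(1 / s (i : ℕ)) : ℝ) : ℂ) else 0) +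
    (if (j : ℕ) + 1 = (i : ℕ) then ((-(1 / s (j : ℕ)) : ℝ) : ℂ) else 0) +
    (if (i : ℕ) = 0 ∧ (j : ℕ) = N - 1 then
        -Complex.exp (-(Complex.I * α * L)) / (s (N - 1) : ℂ) else 0) +
    (if (j : ℕ) = 0 ∧ (i : ℕ) = N - 1 then
        -Complex.exp (Complex.I * α * L) / (s (N - 1) : ℂ) else 0)

/-!
Extend `u` on the unit cell to the infinite chain by the Bloch condition with multiplier `z`, and
let `v i` be its slope across the spacing to the left of site `i`. The capacitance matrix sends `u`
to `v i - v (i + 1)`, so the eigenvalue equation says that `v (i + 1) = v i - ℓ i * λ * u i`, while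
the definition of `v` reads `u (i + 1) = u i + s i * v (i + 1)`. Together these say that
`P_{ℓ i, s i}(λ)` maps the state `(u i, v i)` to `(u (i + 1), v (i + 1))`. Such a Bloch solution is
determined by `(u 0, v 0)`, on which one passage through the cell acts both as `P_tot(λ)` and as
`z`.
-/

section BlochSolution

variable {R m : Type*} {n : ℕ}

/-- The product `f (k - 1) * ⋯ * f 1 * f 0`, in which later factors act after earlier ones. -/
def descendingProd {M : Type*} [Monoid M] (f : ℕ → M) : ℕ → M
  | 0 => 1
  | k + 1 => f k * descendingProd f k

/-- The phase acquired by a Bloch wave with multiplier `z` on stepping from site `i` of the unit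
cell to site `i + 1`. Addition in `Fin (n + 1)` is cyclic, so only the last step, which wraps
around to site `0` of the next cell, contributes. -/
def blochPhase [One R] (z : R) (i : Fin (n + 1)) : R :=
  if i = Fin.last n then z else 1

/-- A solution `X 0, …, X n` on one unit cell of the recursion `X (i + 1) = A i *ᵥ X i`, continued
to the next cell by the Bloch condition `X (n + 1) = z • X 0`. -/
def IsBlochSolution [Semiring R] [Fintype m] (A : ℕ → Matrix m m R) (z : R)
    (X : Fin (n + 1) → m → R) : Prop :=
  ∀ i, blochPhase z i • X (i + 1) = A i *ᵥ X i

section Semiring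

variable [Semiring R] [Fintype m] {A : ℕ → Matrix m m R} {z : R}

theorem isBlochSolution_iff_succ_and_last {X : Fin (n + 1) → m → R} :
    IsBlochSolution A z X ↔
      (∀ i : Fin n, X i.succ = A i *ᵥ X i.castSucc) ∧ z • X 0 = A n *ᵥ X (Fin.last n) := by
  simp only [IsBlochSolution, Fin.forall_fin_succ', blochPhase, Fin.castSucc_ne_last, if_false,
    if_true, one_smul, Fin.coeSucc_eq_succ, Fin.last_add_one, Fin.val_castSucc, Fin.val_last]

variable [DecidableEq m]

theorem IsBlochSolution.descendingProd_mulVec {X : Fin (n + 1) → m → R}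
    (hX : IsBlochSolution A z X) (i : Fin (n + 1)) : descendingProd A i *ᵥ X 0 = X i := by
  induction i using Fin.induction with
  | zero => exact one_mulVec _
  | succ i ih =>
    rw [(isBlochSolution_iff_succ_and_last.1 hX).1, ← ih, mulVec_mulVec]
    rfl

theorem exists_isBlochSolution_iff_exists_descendingProd_mulVec :
    (∃ X : Fin (n + 1) → m → R, X ≠ 0 ∧ IsBlochSolution A z X) ↔
      ∃ x : m → R, x ≠ 0 ∧ descendingProd A (n + 1) *ᵥ x = z • x := by
  constructor
  · rintro ⟨X, hX0, hX⟩
    refine ⟨X 0, fun h0 => hX0 (funext fun i => ?_), ?_⟩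
    · rw [← hX.descendingProd_mulVec, h0, mulVec_zero, Pi.zero_apply]
    · rw [(isBlochSolution_iff_succ_and_last.1 hX).2, ← hX.descendingProd_mulVec (Fin.last n),
        mulVec_mulVec]
      rfl
  · rintro ⟨x, hx0, hx⟩
    refine ⟨fun i => descendingProd A i *ᵥ x, fun h0 => hx0 ?_,
      isBlochSolution_iff_succ_and_last.2 ⟨fun i => (mulVec_mulVec ..).symm, ?_⟩⟩
    · rw [← one_mulVec x]
      exact congrFun h0 0
    · rw [mulVec_mulVec]
      exact (congrArg (z • ·) (one_mulVec x)).trans hx.symm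

end Semiring

theorem blochPhase_ne_zero [Zero R] [One R] [NeZero (1 : R)] {z : R} (hz : z ≠ 0)
    (i : Fin (n + 1)) : blochPhase z i ≠ 0 := by
  unfold blochPhase
  split_ifs
  exacts [hz, one_ne_zero]

theorem blochPhase_inv [InvOneClass R] (z : R) (i : Fin (n + 1)) :
    blochPhase z⁻¹ i = (blochPhase z i)⁻¹ := by
  simp only [blochPhase, apply_ite Inv.inv, inv_one]

/-- The propagation matrix `P_{ℓ,s}(λ)` of `propM`, over an arbitrary commutative ring. -/
def propagationMatrix [CommRing R] (ℓ s lam : R) : Matrix (Fin 2) (Fin 2) R :=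
  !![1 - s * ℓ * lam, s; -(ℓ * lam), 1]

theorem isBlochSolution_propagationMatrix_iff [CommRing R] {s ℓ : ℕ → R} {lam z : R}
    {X : Fin (n + 1) → Fin 2 → R} :
    IsBlochSolution (fun k => propagationMatrix (ℓ k) (s k) lam) z X ↔
      ∀ i, blochPhase z i * X (i + 1) 0 = X i 0 + s i * (blochPhase z i * X (i + 1) 1) ∧
        blochPhase z i * X (i + 1) 1 = X i 1 - ℓ i * lam * X i 0 := by
  refine forall_congr' fun i => ?_
  simp only [funext_iff, Fin.forall_fin_two, propagationMatrix, mulVec, dotProduct,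
    Fin.sum_univ_two, Pi.smul_apply, smul_eq_mul, of_apply, cons_val', cons_val_zero, cons_val_one,
    cons_val_fin_one]
  constructor <;> rintro ⟨h0, h1⟩
  · exact ⟨by rw [h0, h1]; ring, by rw [h1]; ring⟩
  · exact ⟨by rw [h0, h1]; ring, by rw [h1]; ring⟩

end BlochSolution

section Capacitance

variable {K : Type*} [Field K] {n : ℕ}

/-- The matrix `qpCapMatrix` over an arbitrary field, with `n + 1` resonators and a Bloch multiplier
`z` in the role of `e^{iαL}`. Sites are indexed cyclically, so the corner entries are neighbour
terms like the others, singled out only by their `blochPhase`. -/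
def quasiperiodicCapMatrix (n : ℕ) (s : ℕ → K) (z : K) : Matrix (Fin (n + 1)) (Fin (n + 1)) K :=
  of fun i j =>
    (if i = j then 1 / s (i - 1 : Fin (n + 1)) + 1 / s i else 0) -
      (if i + 1 = j then blochPhase z i / s i else 0) -
      (if j + 1 = i then blochPhase z⁻¹ j / s j else 0)

theorem ite_add_one_eq_blochPhase_div (s : ℕ → K) (z : K) (i j : Fin (n + 1)) :
    (if i + 1 = j then blochPhase z i / s i else 0) =
      (if (i : ℕ) + 1 = j then 1 / s i else 0) +
        if (j : ℕ) = 0 ∧ (i : ℕ) = n then z / s n else 0 := by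
  induction i using Fin.lastCases with
  | last =>
    have h_ne : n + 1 ≠ j := j.isLt.ne'
    simp only [blochPhase, Fin.last_add_one, Fin.val_last, if_true, h_ne, if_false, and_true,
      zero_add, Fin.ext_iff, Fin.val_zero, eq_comm (a := 0)]
  | cast i =>
    have h_ne : (i : ℕ) ≠ n := i.isLt.ne
    simp only [blochPhase, Fin.coeSucc_eq_succ, Fin.ext_iff, Fin.val_castSucc, Fin.val_succ,
      Fin.val_last, h_ne, and_false, if_false, add_zero]

/-- The slope of the Bloch extension of `u` across the spacing to the left of site `i`; it is the
second component of the state vector propagated by `propagationMatrix`. -/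
def leftSlope (s : ℕ → K) (z : K) (u : Fin (n + 1) → K) (i : Fin (n + 1)) : K :=
  (u i - blochPhase z⁻¹ (i - 1) * u (i - 1)) / s (i - 1 : Fin (n + 1))

variable {s ℓ : ℕ → K} {z lam : K}

theorem blochPhase_mul_leftSlope_add_one (hz : z ≠ 0) (u : Fin (n + 1) → K) (i : Fin (n + 1)) :
    blochPhase z i * leftSlope s z u (i + 1) = (blochPhase z i * u (i + 1) - u i) / s i := by
  rw [leftSlope, add_sub_cancel_right, blochPhase_inv, mul_div_assoc', mul_sub,
    mul_inv_cancel_left₀ (blochPhase_ne_zero hz i)]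

theorem quasiperiodicCapMatrix_mulVec (hz : z ≠ 0) (u : Fin (n + 1) → K) (i : Fin (n + 1)) :
    (quasiperiodicCapMatrix n s z *ᵥ u) i =
      leftSlope s z u i - blochPhase z i * leftSlope s z u (i + 1) := by
  have left_neighbour (j : Fin (n + 1)) : j + 1 = i ↔ j = i - 1 := eq_sub_iff_add_eq.symm
  simp only [quasiperiodicCapMatrix, mulVec, dotProduct, of_apply, sub_mul, ite_mul, zero_mul,
    Finset.sum_sub_distrib, left_neighbour, Finset.sum_ite_eq, Finset.sum_ite_eq',
    Finset.mem_univ, if_true]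
  rw [blochPhase_mul_leftSlope_add_one hz, leftSlope]
  ring

theorem diagonal_mul_quasiperiodicCapMatrix_mulVec_eq_smul_iff
    (hℓ : ∀ i : Fin (n + 1), ℓ i ≠ 0) (hz : z ≠ 0) {u : Fin (n + 1) → K} :
    (diagonal (fun i : Fin (n + 1) => 1 / ℓ i) * quasiperiodicCapMatrix n s z) *ᵥ u = lam • u ↔
      ∀ i, blochPhase z i * leftSlope s z u (i + 1) = leftSlope s z u i - ℓ i * lam * u i := by
  rw [funext_iff]
  refine forall_congr' fun i => ?_
  rw [← mulVec_mulVec, mulVec_diagonal, quasiperiodicCapMatrix_mulVec hz, Pi.smul_apply,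
    smul_eq_mul, one_div, inv_mul_eq_iff_eq_mul₀ (hℓ i), ← mul_assoc, sub_eq_iff_eq_add,
    eq_sub_iff_add_eq', eq_comm]

theorem isBlochSolution_propagationMatrix_iff_leftSlope (hs : ∀ i : Fin (n + 1), s i ≠ 0)
    (hℓ : ∀ i : Fin (n + 1), ℓ i ≠ 0) (hz : z ≠ 0) {u v : Fin (n + 1) → K} :
    IsBlochSolution (fun k => propagationMatrix (ℓ k) (s k) lam) z (fun i => ![u i, v i]) ↔
      v = leftSlope s z u ∧
        (diagonal (fun i : Fin (n + 1) => 1 / ℓ i) * quasiperiodicCapMatrix n s z) *ᵥ u =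
          lam • u := by
  have slope_iff (i : Fin (n + 1)) :
      blochPhase z i * u (i + 1) = u i + s i * (blochPhase z i * v (i + 1)) ↔
        v (i + 1) = leftSlope s z u (i + 1) := by
    rw [← mul_right_inj' (blochPhase_ne_zero hz i) (b := v _), blochPhase_mul_leftSlope_add_one hz,
      eq_div_iff (hs i), eq_sub_iff_add_eq', mul_comm _ (s i), eq_comm]
  have slope_all_iff : (∀ i, v (i + 1) = leftSlope s z u (i + 1)) ↔ v = leftSlope s z u :=
    (funext_iff.trans (add_right_surjective (1 : Fin (n + 1))).forall).symm
  rw [isBlochSolution_propagationMatrix_iff,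
    diagonal_mul_quasiperiodicCapMatrix_mulVec_eq_smul_iff hℓ hz]
  simp only [cons_val_zero, cons_val_one, slope_iff, forall_and, slope_all_iff]
  exact and_congr_right fun hv => by rw [hv]

end Capacitance

theorem statement13_general {K : Type*} [Field K] (n : ℕ) (s ℓ : ℕ → K)
    (hs : ∀ i : Fin (n + 1), s i ≠ 0) (hℓ : ∀ i : Fin (n + 1), ℓ i ≠ 0)
    (z : K) (hz : z ≠ 0) (lam : K) :
    (∃ u : Fin (n + 1) → K, u ≠ 0 ∧
        (diagonal (fun i : Fin (n + 1) => 1 / ℓ i) * quasiperiodicCapMatrix n s z) *ᵥ u =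
          lam • u) ↔
      ∃ x : Fin 2 → K, x ≠ 0 ∧
        descendingProd (fun k => propagationMatrix (ℓ k) (s k) lam) (n + 1) *ᵥ x = z • x := by
  rw [← exists_isBlochSolution_iff_exists_descendingProd_mulVec]
  constructor
  · rintro ⟨u, hu0, hu⟩
    refine ⟨fun i => ![u i, leftSlope s z u i], fun h0 => hu0 (funext fun i => ?_),
      (isBlochSolution_propagationMatrix_iff_leftSlope hs hℓ hz).2 ⟨rfl, hu⟩⟩
    exact congrFun (congrFun h0 i) 0
  · rintro ⟨X, hX0, hX⟩
    obtain ⟨u, v, rfl⟩ : ∃ u v : Fin (n + 1) → K, X = fun i => ![u i, v i] :=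
      ⟨fun i => X i 0, fun i => X i 1, funext fun i => (FinVec.etaExpand_eq (X i)).symm⟩
    obtain ⟨rfl, hu⟩ := (isBlochSolution_propagationMatrix_iff_leftSlope hs hℓ hz).1 hX
    refine ⟨u, ?_, hu⟩
    rintro rfl
    exact hX0 (by ext i j; fin_cases j <;> simp [leftSlope])

theorem qpCapMatrix_succ_eq_quasiperiodicCapMatrix (n : ℕ) (s : ℕ → ℝ) (L α : ℝ) :
    qpCapMatrix (n + 1) s L α =
      quasiperiodicCapMatrix n (fun k => (s k : ℂ)) (Complex.exp (Complex.I * α * L)) := by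
  ext i j
  simp only [qpCapMatrix, quasiperiodicCapMatrix, of_apply,
    ite_add_one_eq_blochPhase_div (fun k => (s k : ℂ)), Fin.coe_sub_one, ← Complex.exp_neg,
    add_tsub_cancel_right, ← Fin.ext_iff, Fin.val_eq_zero_iff, Complex.ofReal_add,
    Complex.ofReal_div, Complex.ofReal_neg, Complex.ofReal_one]
  simp only [sub_eq_add_neg, neg_add, neg_ite, neg_zero, neg_div]
  abel

theorem map_ofReal_orderedProd_propM (ℓ s : ℕ → ℝ) (lam : ℝ) (k : ℕ) :
    (orderedProd (fun i => propM (ℓ i) (s i) lam) 0 k).map Complex.ofReal =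
      descendingProd (fun i => propagationMatrix (ℓ i : ℂ) (s i) lam) k := by
  induction k with
  | zero => exact Matrix.map_one _ Complex.ofReal_zero Complex.ofReal_one
  | succ k ih =>
    have propM_map : (propM (ℓ k) (s k) lam).map Complex.ofReal =
        propagationMatrix (ℓ k : ℂ) (s k) lam := by
      ext i j
      fin_cases i <;> fin_cases j <;> simp [propM, propagationMatrix]
    rw [orderedProd, descendingProd, ← ih, ← propM_map, Nat.zero_add]
    exact Matrix.map_mul (f := Complex.ofRealHom)

/-- with `P_tot(λ) = P_{ℓ_N,s_N}(λ)⋯P_{ℓ_1,s_1}(λ)` and unit wave speeds,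
a real `λ` is an eigenvalue of `𝓒^α = VC^α` if and only if `e^{iαL}` is an eigenvalue of
`P_tot(λ)` regarded as a complex matrix. -/
theorem statement13 (N : ℕ) (hN : 2 ≤ N) (s ℓ : ℕ → ℝ)
    (hs : ∀ i, i < N → 0 < s i) (hℓ : ∀ i, i < N → 0 < ℓ i)
    (L : ℝ) (hL : 0 < L) (α : ℝ) (lam : ℝ) :
    (∃ w : Fin N → ℂ, w ≠ 0 ∧
        ((Matrix.diagonal fun i : Fin N => ((1 / ℓ (i : ℕ) : ℝ) : ℂ)) *
            qpCapMatrix N s L α).mulVec w = (lam : ℂ) • w) ↔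
      ∃ w : Fin 2 → ℂ, w ≠ 0 ∧
        ((orderedProd (fun i => propM (ℓ i) (s i) lam) 0 N).map Complex.ofReal).mulVec w =
          Complex.exp (Complex.I * α * L) • w := by
  obtain ⟨n, rfl⟩ : ∃ n, N = n + 1 := ⟨N - 1, by omega⟩
  simp only [Complex.ofReal_div, Complex.ofReal_one, qpCapMatrix_succ_eq_quasiperiodicCapMatrix,
    map_ofReal_orderedProd_propM]
  exact statement13_general n (fun k => (s k : ℂ)) (fun k => (ℓ k : ℂ))
    (fun i => Complex.ofReal_ne_zero.2 (hs i i.isLt).ne')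
    (fun i => Complex.ofReal_ne_zero.2 (hℓ i i.isLt).ne') _ (Complex.exp_ne_zero _) lam
end

section
/- Let 𝓒^α = VC^α with all wave speeds equal to one and P_tot(λ) := P_{ℓ_N,s_N}(λ)⋯P_{ℓ_1,s_1}(λ). If λ ∈ ℝ satisfies |tr P_tot(λ)| > 2, then λ is not an eigenvalue of 𝓒^α for any quasimomentum α ∈ ℝ; that is, λ lies in a bandgap of the periodised system. -/
open Matrix BigOperators

/-!
Let `u` be the quasiperiodic continuation of an eigenvector and `d i` its slope in the gap to the
left of resonator `i`. The eigenvalue equation says that `d` drops by `λ ℓ i u i` across resonator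
`i`, so the pair `(u i, d i)` is carried to resonator `i + 1` by `P_{ℓ i, s i}(λ)`, and `P_tot`
maps `(u 0, d 0)` to `exp (iαL)` times itself. As `det P_tot = 1`, its other eigenvalue is
`exp (-iαL)`, so the trace is `2 cos (αL)`.
-/

section OrderedProd

variable (f : ℕ → Matrix (Fin 2) (Fin 2) ℝ) (a : ℕ)

lemma det_orderedProd (n : ℕ) :
    (orderedProd f a n).det = ∏ i ∈ Finset.range n, (f (a + i)).det := by
  induction n with
  | zero => simp [orderedProd]
  | succ n ih => rw [orderedProd, det_mul, ih, Finset.prod_range_succ, mul_comm]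

lemma eq_orderedProd_map_mulVec {R : Type*} [Semiring R] (φ : ℝ →+* R) {v : ℕ → Fin 2 → R}
    (n : ℕ) (hv : ∀ k < n, v (k + 1) = (f (a + k)).map φ *ᵥ v k) :
    v n = (orderedProd f a n).map φ *ᵥ v 0 := by
  induction n with
  | zero => simp [orderedProd]
  | succ n ih =>
    rw [hv n n.lt_succ_self, ih fun k hk => hv k (hk.trans n.lt_succ_self), mulVec_mulVec,
      orderedProd, Matrix.map_mul]

end OrderedProd

lemma det_propM (l sp lam : ℝ) : (propM l sp lam).det = 1 := by
  rw [propM, det_fin_two_of]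
  ring

lemma propM_map_mulVec (l sp lam : ℝ) (x y : ℂ) :
    (propM l sp lam).map Complex.ofRealHom *ᵥ ![x, y] =
      ![x + sp * (y - lam * l * x), y - lam * l * x] := by
  simp only [propM, mulVec_fin_two, map_apply, of_apply, cons_val', cons_val_zero, cons_val_one,
    cons_val_fin_one, Complex.ofRealHom_eq_coe, Complex.ofReal_sub, Complex.ofReal_neg,
    Complex.ofReal_mul, Complex.ofReal_one, vecCons_inj, and_true]
  constructor <;> ring

lemma trace_eq_add_inv_of_det_eq_one {K : Type*} [Field K] {A : Matrix (Fin 2) (Fin 2) K}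
    (hA : A.det = 1) {z : K} {v : Fin 2 → K} (hv : v ≠ 0) (hAv : A *ᵥ v = z • v) :
    A.trace = z + z⁻¹ := by
  have hdet : (A - z • 1).det = 0 :=
    exists_mulVec_eq_zero_iff.mp ⟨v, hv, by simp [sub_mulVec, smul_mulVec, hAv]⟩
  have hchar : z * z - A.trace * z + 1 = 0 := by
    rw [det_fin_two] at hA hdet
    simp only [Matrix.sub_apply, Matrix.smul_apply, one_apply_eq, one_apply_ne zero_ne_one,
      one_apply_ne one_ne_zero, smul_eq_mul, mul_one, mul_zero, sub_zero] at hdet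
    rw [trace_fin_two]
    linear_combination hdet - hA
  have hz : z ≠ 0 := fun h0 => by simp [h0] at hchar
  field_simp
  linear_combination -hchar

lemma trace_eq_two_mul_cos_of_det_eq_one {A : Matrix (Fin 2) (Fin 2) ℝ} (hA : A.det = 1) {θ : ℝ}
    {v : Fin 2 → ℂ} (hv : v ≠ 0)
    (hAv : A.map Complex.ofRealHom *ᵥ v = Complex.exp (θ * Complex.I) • v) :
    A.trace = 2 * Real.cos θ := by
  have hdet : (A.map Complex.ofRealHom).det = 1 := by
    rw [← RingHom.mapMatrix_apply, ← RingHom.map_det, hA, map_one]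
  have htrace := trace_eq_add_inv_of_det_eq_one hdet hv hAv
  rw [← Complex.exp_neg, ← neg_mul, ← Complex.two_cos, ← AddMonoidHom.map_trace,
    Complex.ofRealHom_eq_coe] at htrace
  exact_mod_cast htrace

lemma exists_quasiperiodic_extension {R : Type*} [Monoid R] {N : ℕ} [NeZero N] (z : R)
    (w : Fin N → R) :
    ∃ u : ℕ → R, (fun j : Fin N => u j) = w ∧ ∀ n, u (n + N) = z * u n := by
  refine ⟨fun n => z ^ (n / N) * w (Fin.ofNat N n), ?_, fun n => ?_⟩
  · funext j
    simp [Nat.div_eq_of_lt j.isLt]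
  · simp [Nat.add_div_right n (NeZero.pos N), pow_succ', mul_assoc, Fin.ofNat]

section Slopes

/-- The slope `(u i - u (i - 1)) / s (i - 1)` of a field with Floquet multiplier `z` in the gap to
the left of resonator `i`. At `i = 0` that gap is the last one of the previous cell, where the
field is `z⁻¹ * u (N - 1)`. -/
noncomputable def gapSlope (N : ℕ) (s : ℕ → ℝ) (z : ℂ) (u : ℕ → ℂ) : ℕ → ℂ
  | 0 => (u 0 - z⁻¹ * u (N - 1)) / s (N - 1)
  | k + 1 => (u (k + 1) - u k) / s k

/-- The value of the field at resonator `i` together with its slope in the gap to the left: the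
vector on which the propagation matrices act. -/
noncomputable def transferState (N : ℕ) (s : ℕ → ℝ) (z : ℂ) (u : ℕ → ℂ) (i : ℕ) : Fin 2 → ℂ :=
  ![u i, gapSlope N s z u i]

variable {N : ℕ} {s ℓ : ℕ → ℝ} {z : ℂ} {u : ℕ → ℂ} {L α lam : ℝ}

lemma transferState_quasiperiodic [NeZero N] (hz : z ≠ 0) (hu : u N = z * u 0) :
    transferState N s z u N = z • transferState N s z u 0 := by
  obtain ⟨M, rfl⟩ := Nat.exists_eq_succ_of_ne_zero (NeZero.ne N)
  have hslope : gapSlope (M + 1) s z u (M + 1) = z * gapSlope (M + 1) s z u 0 := by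
    simp only [gapSlope, hu, Nat.succ_sub_one]
    field_simp
  simp [transferState, hu, hslope]

lemma transferState_succ {i : ℕ} (hs : s i ≠ 0)
    (hslope : gapSlope N s z u (i + 1) = gapSlope N s z u i - lam * ℓ i * u i) :
    transferState N s z u (i + 1) =
      (propM (ℓ i) (s i) lam).map Complex.ofRealHom *ᵥ transferState N s z u i := by
  have hs' : (s i : ℂ) ≠ 0 := Complex.ofReal_ne_zero.mpr hs
  have hvalue : u (i + 1) = u i + s i * gapSlope N s z u (i + 1) := by
    rw [gapSlope, mul_div_cancel₀ _ hs', add_sub_cancel]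
  rw [transferState, transferState, propM_map_mulVec, ← hslope, ← hvalue]

lemma sum_right_coupling (hu : u N = z * u 0) (i : Fin N) :
    ∑ j : Fin N, ((if (i : ℕ) + 1 = j then ((-(1 / s i) : ℝ) : ℂ) else 0) +
      (if (j : ℕ) = 0 ∧ (i : ℕ) = N - 1 then -z / (s (N - 1) : ℂ) else 0)) * u j =
      -(u (i + 1) / s i) := by
  obtain ⟨i, hi⟩ := i
  rcases (Nat.succ_le_of_lt hi).lt_or_eq with hlt | rfl
  · rw [Fintype.sum_eq_single ⟨i + 1, hlt⟩ fun j hj => by grind, if_pos rfl, if_neg (by simp)]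
    push_cast
    ring
  · rw [Fintype.sum_eq_single ⟨0, i.succ_pos⟩ fun j hj => by grind, if_neg (by simp),
      if_pos ⟨rfl, rfl⟩, hu, Nat.succ_sub_one]
    ring

lemma sum_left_coupling (i : Fin N) :
    ∑ j : Fin N, ((if (j : ℕ) + 1 = i then ((-(1 / s j) : ℝ) : ℂ) else 0) +
      (if (i : ℕ) = 0 ∧ (j : ℕ) = N - 1 then -z⁻¹ / (s (N - 1) : ℂ) else 0)) * u j =
      gapSlope N s z u i -
        u i / s (if (i : ℕ) = 0 then N - 1 else (i : ℕ) - 1) := by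
  obtain ⟨_ | k, hi⟩ := i
  · rw [Fintype.sum_eq_single ⟨N - 1, by omega⟩ fun j hj => by grind, if_neg (by simp),
      if_pos ⟨rfl, rfl⟩, if_pos rfl, gapSlope]
    ring
  · rw [Fintype.sum_eq_single ⟨k, by omega⟩ fun j hj => by grind, if_pos rfl, if_neg (by simp),
      if_neg (by simp), gapSlope, Nat.add_sub_cancel]
    push_cast
    ring

lemma qpCapMatrix_mulVec_apply (hu : u N = Complex.exp (Complex.I * α * L) * u 0) (i : Fin N) :
    (qpCapMatrix N s L α *ᵥ fun j : Fin N => u j) i =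
      gapSlope N s (Complex.exp (Complex.I * α * L)) u i -
        gapSlope N s (Complex.exp (Complex.I * α * L)) u (i + 1) := by
  have hright := sum_right_coupling (s := s) hu i
  have hleft := sum_left_coupling (s := s) (z := Complex.exp (Complex.I * α * L)) (u := u) i
  simp only [mulVec, dotProduct, qpCapMatrix, of_apply, Complex.exp_neg]
  simp only [add_mul, Finset.sum_add_distrib, Fin.val_inj, ite_mul, zero_mul,
    Finset.sum_ite_eq, Finset.mem_univ, if_true] at hright hleft ⊢
  rw [gapSlope]
  push_cast at hright hleft ⊢
  linear_combination hright + hleft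

lemma gapSlope_succ_of_eigenvector {i : ℕ} (hi : i < N) (hℓ : ℓ i ≠ 0)
    (hu : u N = Complex.exp (Complex.I * α * L) * u 0)
    (heigen : ((Matrix.diagonal fun i : Fin N => ((1 / ℓ (i : ℕ) : ℝ) : ℂ)) *
      qpCapMatrix N s L α).mulVec (fun j : Fin N => u j) = (lam : ℂ) • fun j : Fin N => u j) :
    gapSlope N s (Complex.exp (Complex.I * α * L)) u (i + 1) =
      gapSlope N s (Complex.exp (Complex.I * α * L)) u i - lam * ℓ i * u i := by
  have hℓ' : (ℓ i : ℂ) ≠ 0 := Complex.ofReal_ne_zero.mpr hℓ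
  have hrow := congrFun heigen ⟨i, hi⟩
  rw [← mulVec_mulVec, mulVec_diagonal, qpCapMatrix_mulVec_apply hu, Pi.smul_apply,
    smul_eq_mul] at hrow
  push_cast at hrow
  field_simp at hrow
  linear_combination -hrow

lemma transferState_eq_orderedProd_mulVec (hs : ∀ i < N, s i ≠ 0) (hℓ : ∀ i < N, ℓ i ≠ 0)
    (hu : u N = Complex.exp (Complex.I * α * L) * u 0)
    (heigen : ((Matrix.diagonal fun i : Fin N => ((1 / ℓ (i : ℕ) : ℝ) : ℂ)) *
      qpCapMatrix N s L α).mulVec (fun j : Fin N => u j) = (lam : ℂ) • fun j : Fin N => u j)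
    {k : ℕ} (hk : k ≤ N) :
    transferState N s (Complex.exp (Complex.I * α * L)) u k =
      (orderedProd (fun i => propM (ℓ i) (s i) lam) 0 k).map Complex.ofRealHom *ᵥ
        transferState N s (Complex.exp (Complex.I * α * L)) u 0 := by
  refine eq_orderedProd_map_mulVec _ 0 _ k fun i hi => ?_
  have hiN : i < N := hi.trans_le hk
  rw [zero_add]
  exact transferState_succ (hs i hiN) (gapSlope_succ_of_eigenvector hiN (hℓ i hiN) hu heigen)

end Slopes

theorem statement14_general {N : ℕ} {s ℓ : ℕ → ℝ} (hs : ∀ i < N, s i ≠ 0)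
    (hℓ : ∀ i < N, ℓ i ≠ 0) {L α lam : ℝ} {w : Fin N → ℂ} (hw : w ≠ 0)
    (heigen : ((Matrix.diagonal fun i : Fin N => ((1 / ℓ (i : ℕ) : ℝ) : ℂ)) *
      qpCapMatrix N s L α).mulVec w = (lam : ℂ) • w) :
    (orderedProd (fun i => propM (ℓ i) (s i) lam) 0 N).trace = 2 * Real.cos (α * L) := by
  have : NeZero N := ⟨by rintro rfl; exact hw (Subsingleton.elim _ _)⟩
  obtain ⟨u, rfl, hu⟩ := exists_quasiperiodic_extension (Complex.exp (Complex.I * α * L)) w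
  have huN : u N = Complex.exp (Complex.I * α * L) * u 0 := by simpa using hu 0
  have hprop := fun k hk => transferState_eq_orderedProd_mulVec (k := k) hs hℓ huN heigen hk
  have hstate : transferState N s (Complex.exp (Complex.I * α * L)) u 0 ≠ 0 := fun h0 => by
    refine hw (funext fun j => ?_)
    have hj := hprop j j.isLt.le
    rw [h0, mulVec_zero] at hj
    exact congrFun hj 0
  have hdet : (orderedProd (fun i => propM (ℓ i) (s i) lam) 0 N).det = 1 := by
    simp [det_orderedProd, det_propM]
  refine trace_eq_two_mul_cos_of_det_eq_one hdet hstate ?_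
  rw [← hprop N le_rfl, transferState_quasiperiodic (Complex.exp_ne_zero _) huN, Complex.ofReal_mul,
    mul_comm _ Complex.I, mul_assoc]

/-- if `|tr P_tot(λ)| > 2` then `λ` is not an eigenvalue of `𝓒^α = VC^α`
(unit wave speeds) for any quasimomentum `α ∈ ℝ`: `λ` lies in a bandgap of the periodised
system. -/
theorem statement14 (N : ℕ) (hN : 2 ≤ N) (s ℓ : ℕ → ℝ)
    (hs : ∀ i, i < N → 0 < s i) (hℓ : ∀ i, i < N → 0 < ℓ i)
    (L : ℝ) (hL : 0 < L) (lam : ℝ)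
    (htr : 2 < |(orderedProd (fun i => propM (ℓ i) (s i) lam) 0 N).trace|) :
    ∀ α : ℝ, ¬∃ w : Fin N → ℂ, w ≠ 0 ∧
        ((Matrix.diagonal fun i : Fin N => ((1 / ℓ (i : ℕ) : ℝ) : ℂ)) *
            qpCapMatrix N s L α).mulVec w = (lam : ℂ) • w := by
  rintro α ⟨w, hw, heigen⟩
  rw [statement14_general (fun i hi => (hs i hi).ne') (fun i hi => (hℓ i hi).ne') hw heigen,
    abs_mul, abs_two] at htr
  linarith [Real.abs_cos_le_one (α * L)]
end
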